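/- arXiv:2302.01832 — 2 statements merged into one kernel-verified Lean document; each statement's English description precedes it below -/
import Mathlib

section
/- (F. and M. Riesz theorem) If μ is a finite complex Borel measure on the circle ℝ/2πℤ whose Fourier coefficients μ̂(n) = ∫ e^{−int} dμ(t) vanish for all negative integers n, then μ is absolutely continuous with respect to Lebesgue measure. -/
open MeasureTheory Complex

local instance : Fact ((0:ℝ) < 2 * Real.pi) := ⟨by positivity⟩

/-- Integration of a (bounded measurable) complex-valued function against a complex
measure, via the Jordan decompositions of its real and imaginary parts. -/
noncomputable def cmIntegral (μ : ComplexMeasure (AddCircle (2 * Real.pi)))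
    (f : AddCircle (2 * Real.pi) → ℂ) : ℂ :=
  ((∫ t, f t ∂μ.re.toJordanDecomposition.posPart)
      - ∫ t, f t ∂μ.re.toJordanDecomposition.negPart)
    + Complex.I * ((∫ t, f t ∂μ.im.toJordanDecomposition.posPart)
      - ∫ t, f t ∂μ.im.toJordanDecomposition.negPart)

/-- The `n`-th Fourier coefficient `μ̂(n) = ∫ e^{−int} dμ(t)` of a complex measure on
the circle `ℝ/2πℤ`. -/
noncomputable def fourierCoeffCM (μ : ComplexMeasure (AddCircle (2 * Real.pi)))
    (n : ℤ) : ℂ :=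
  cmIntegral μ (fun t => fourier (-n) t)

set_option linter.unusedSectionVars false


section abstractPart
variable {H : Type*} [NormedAddCommGroup H] [InnerProductSpace ℂ H]

/-- closed span of `U k x`, `k ≥ n` -/
def rieszK (U : ℤ → H →L[ℂ] H) (x : H) (n : ℤ) : Submodule ℂ H :=
  (Submodule.span ℂ {v | ∃ k, n ≤ k ∧ v = U k x}).topologicalClosure

theorem rieszK_mem (U : ℤ → H →L[ℂ] H) (x : H) {n k : ℤ} (h : n ≤ k) :
    U k x ∈ rieszK U x n :=
  Submodule.le_topologicalClosure _ (Submodule.subset_span ⟨k, h, rfl⟩)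

theorem rieszK_le (U : ℤ → H →L[ℂ] H) (x : H) (n : ℤ) (W : Submodule ℂ H)
    (hW : IsClosed (W : Set H)) (h : ∀ k, n ≤ k → U k x ∈ W) : rieszK U x n ≤ W := by
  apply Submodule.topologicalClosure_minimal _ _ hW
  rw [Submodule.span_le]
  rintro _ ⟨k, hk, rfl⟩
  exact h k hk

theorem rieszK_anti (U : ℤ → H →L[ℂ] H) (x : H) {n m : ℤ} (h : m ≤ n) :
    rieszK U x n ≤ rieszK U x m :=
  rieszK_le U x n _ (Submodule.isClosed_topologicalClosure _)
    fun _ hk => rieszK_mem U x (h.trans hk)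

theorem rieszK_shift (U : ℤ → H →L[ℂ] H) (hU : ∀ m n v, U m (U n v) = U (m + n) v) (x : H)
    (n m : ℤ) {v : H} (hv : v ∈ rieszK U x n) : U m v ∈ rieszK U x (m + n) := by
  have : rieszK U x n ≤ (rieszK U x (m + n)).comap (U m).toLinearMap := by
    apply rieszK_le
    · exact (Submodule.isClosed_topologicalClosure _).preimage (U m).continuous
    · intro k hk
      simp only [Submodule.mem_comap, ContinuousLinearMap.coe_coe, hU]
      exact rieszK_mem U x (by omega)
  exact this hv

theorem rieszK_orth (U : ℤ → H →L[ℂ] H) (x : H) (n : ℤ) (y : H)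
    (h : ∀ k, n ≤ k → inner ℂ y (U k x) = 0) {v : H} (hv : v ∈ rieszK U x n) :
    inner ℂ y v = 0 := by
  have : rieszK U x n ≤ (ℂ ∙ y)ᗮ := by
    apply rieszK_le _ _ _ _ (Submodule.isClosed_orthogonal _)
    intro k hk
    rw [Submodule.mem_orthogonal_singleton_iff_inner_right]
    exact h k hk
  exact (Submodule.mem_orthogonal_singleton_iff_inner_right).1 (this hv)

theorem riesz_abstract [CompleteSpace H] (U : ℤ → H →L[ℂ] H) (hU : ∀ m n v, U m (U n v) = U (m + n) v)
    (hU0 : ∀ v, U 0 v = v) (hUa : ∀ n u v, inner ℂ (U n u) v = inner ℂ u (U (-n) v)) (x : H) :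
    ∃ F : H, (∀ n, n ≠ 0 → inner ℂ F (U n F) = 0) ∧
      ∀ P : H →L[ℂ] H, (∀ u v, inner ℂ (P u) v = inner ℂ u (P v)) →
        (∀ u, P (P u) = P u) →
        (∀ n v, P (U n v) = U n (P v)) → P F = 0 →
        (∀ b, (∀ n, inner ℂ (U n F) b = 0) → P b = b) →
        ∀ y, (∀ n, 1 ≤ n → inner ℂ y (U n x) = 0) → ∀ n, inner ℂ (P y) (U n x) = 0 := by
  have hcl : ∀ z n, IsClosed (rieszK U z n : Set H) := fun z n =>
    Submodule.isClosed_topologicalClosure _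
  have : ∀ z n, CompleteSpace (rieszK U z n) := fun z n => (hcl z n).completeSpace_coe
  have hx0 : x ∈ rieszK U x 0 := by simpa [hU0] using rieszK_mem U x (le_refl 0)
  obtain ⟨φ, hφ, hF⟩ : ∃ φ ∈ rieszK U x 1, x - φ ∈ (rieszK U x 1)ᗮ :=
    ⟨_, Submodule.starProjection_apply_mem _ _, Submodule.sub_starProjection_mem_orthogonal x⟩
  set F := x - φ with hFd
  have hF0 : F ∈ rieszK U x 0 := sub_mem hx0 (rieszK_anti U x (by norm_num) hφ)
  have hFo : ∀ v ∈ rieszK U x 1, inner ℂ F v = 0 := fun v hv =>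
    (Submodule.mem_orthogonal' _ _).1 hF v hv
  have hFn : ∀ n, U n F ∈ rieszK U x n := fun n => by
    simpa using rieszK_shift U hU x 0 n hF0
  have hpos : ∀ n, 1 ≤ n → inner ℂ F (U n F) = 0 := fun n hn =>
    hFo _ (rieszK_anti U x hn (hFn n))
  refine ⟨F, ?_, ?_⟩
  · intro n hn
    rcases lt_or_gt_of_ne hn with h | h
    · rw [← neg_neg n, ← hUa, ← inner_conj_symm, hpos _ (by omega)]; simp
    · exact hpos n (by omega)
  intro P hPs hPP hPU hPF hPb y hy
  obtain ⟨a, ha, hb⟩ : ∃ a ∈ rieszK U F 0, x - a ∈ (rieszK U F 0)ᗮ :=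
    ⟨_, Submodule.starProjection_apply_mem _ _, Submodule.sub_starProjection_mem_orthogonal x⟩
  have haK : a ∈ rieszK U x 0 :=
    rieszK_le U F 0 _ (hcl _ _) (fun k hk => rieszK_anti U x hk (hFn k)) ha
  have hbK : x - a ∈ rieszK U x 0 := sub_mem hx0 haK
  have hPa : P a = 0 := by
    have : inner ℂ (P a) a = 0 := by
      apply rieszK_orth U F 0 _ _ ha
      intro k _
      rw [hPs, hPU, hPF]; simp
    rw [← inner_self_eq_zero (𝕜 := ℂ), ← hPs, hPP, this]
  have hbb : P (x - a) = x - a := by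
    apply hPb
    intro n
    rcases le_or_gt 0 n with h | h
    · exact (Submodule.mem_orthogonal _ _).1 hb _ (rieszK_mem U F h)
    · rw [hUa]
      apply hFo
      have := rieszK_shift U hU x 0 (-n) hbK
      exact rieszK_anti U x (by omega) this
  have hPx : P x = x - a := by rw [← hbb, map_sub, hPa, sub_zero]
  have hn1 : ∀ n, 1 ≤ n → inner ℂ (P y) (U n x) = 0 := by
    intro n hn
    rw [hPs, hPU, hPx]
    have := rieszK_shift U hU x 0 n hbK
    exact rieszK_orth U x 1 y hy (rieszK_anti U x (by omega) this)
  have key : ∀ N : ℕ, ∀ n : ℤ, 1 - (N : ℤ) ≤ n → inner ℂ (P y) (U n x) = 0 := by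
    intro N
    induction N with
    | zero => intro n hn; exact hn1 n (by simpa using hn)
    | succ N ih =>
      intro n hn
      have hxe : x = F + φ := by simp [hFd]
      have h1 : inner ℂ (P y) (U n F) = 0 := by rw [hPs, hPU, hPF]; simp
      have h2 : inner ℂ (P y) (U n φ) = 0 := by
        apply rieszK_orth U x (n + 1) _ _ (rieszK_shift U hU x 1 n hφ)
        intro k hk
        exact ih k (by push_cast at hn; omega)
      conv_lhs => rw [hxe]
      rw [map_add, inner_add_right, h1, h2, add_zero]
  intro n
  exact key (1 - n).toNat n (by omega)
end abstractPart

section circlePart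
variable {T : ℝ} [hT : Fact (0 < T)]

/-- A continuous functional vanishing on all characters vanishes. -/
theorem riesz_functional_zero (Λ : C(AddCircle T, ℂ) →L[ℂ] ℂ) (h : ∀ n : ℤ, Λ (fourier n) = 0)
    (f : C(AddCircle T, ℂ)) : Λ f = 0 := by
  have h1 : (Submodule.span ℂ (Set.range <| @fourier T)).topologicalClosure ≤ Λ.ker := by
    apply Submodule.topologicalClosure_minimal _ _ Λ.isClosed_ker
    rw [Submodule.span_le]
    rintro _ ⟨n, rfl⟩
    exact h n
  rw [span_fourier_closure_eq_top] at h1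
  exact h1 (Submodule.mem_top : f ∈ ⊤)

theorem riesz_int (σ : Measure (AddCircle T)) (g : AddCircle T → ℂ)
    (hg : Integrable g σ) (f : C(AddCircle T, ℂ)) : Integrable (fun t => f t * g t) σ :=
  hg.bdd_mul (c := ‖f‖) f.continuous.aestronglyMeasurable (.of_forall fun t => f.norm_coe_le_norm t)

/-- `f ↦ ∫ f g dσ` -/
noncomputable def rieszFun (σ : Measure (AddCircle T)) (g : AddCircle T → ℂ)
    (hg : Integrable g σ) : C(AddCircle T, ℂ) →L[ℂ] ℂ :=
  LinearMap.mkContinuous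
    { toFun := fun f => ∫ t, f t * g t ∂σ
      map_add' := fun f₁ f₂ => by
        simp only [ContinuousMap.add_apply, add_mul]
        exact integral_add (riesz_int σ g hg f₁) (riesz_int σ g hg f₂)
      map_smul' := fun c f => by
        simp only [ContinuousMap.smul_apply, smul_eq_mul, mul_assoc, RingHom.id_apply]
        exact integral_const_mul _ _ }
    (∫ t, ‖g t‖ ∂σ) (fun f => by
      simp only [LinearMap.coe_mk, AddHom.coe_mk]
      rw [mul_comm, ← integral_const_mul]
      apply norm_integral_le_of_norm_le (hg.norm.const_mul _)
      refine .of_forall fun t => ?_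
      rw [norm_mul]
      gcongr
      exact f.norm_coe_le_norm t)

theorem rieszFun_apply (σ : Measure (AddCircle T)) (g : AddCircle T → ℂ)
    (hg : Integrable g σ) (f : C(AddCircle T, ℂ)) :
    rieszFun σ g hg f = ∫ t, f t * g t ∂σ := rfl

/-- Two finite measures with equal Fourier coefficients coincide. -/
theorem riesz_measure_ext (σ τ : Measure (AddCircle T)) [IsFiniteMeasure σ] [IsFiniteMeasure τ]
    (h : ∀ n : ℤ, ∫ t, fourier n t ∂σ = ∫ t, fourier n t ∂τ) : σ = τ := by
  apply ext_of_forall_integral_eq_of_IsFiniteMeasure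
  intro f
  let f' : C(AddCircle T, ℂ) := ⟨fun t => (f t : ℂ), by fun_prop⟩
  have := riesz_functional_zero
    (rieszFun σ (fun _ => 1) (integrable_const _) - rieszFun τ (fun _ => 1) (integrable_const _))
    (fun n => by
      rw [sub_apply, rieszFun_apply, rieszFun_apply]
      simp only [mul_one]
      rw [h n, sub_self]) f'
  simp only [sub_apply, rieszFun_apply, mul_one, sub_eq_zero, f',
    ContinuousMap.coe_mk] at this
  rw [integral_complex_ofReal, integral_complex_ofReal] at this
  exact_mod_cast this

theorem riesz_real_zero (σ : Measure (AddCircle T)) [IsFiniteMeasure σ]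
    (g : AddCircle T → ℝ) (hg : Integrable g σ)
    (h : ∀ f : C(AddCircle T, ℝ), ∫ t, f t * g t ∂σ = 0) : g =ᵐ[σ] 0 := by
  have i1 : Integrable (fun t => max (g t) 0) σ := hg.pos_part
  have i2 : Integrable (fun t => max (-g t) 0) σ := hg.neg_part
  have := isFiniteMeasure_withDensity_ofReal (μ := σ) hg.2
  have := isFiniteMeasure_withDensity_ofReal (μ := σ) (f := fun t => - g t) hg.neg.2
  have hm : AEMeasurable (fun t => ENNReal.ofReal (g t)) σ := hg.aemeasurable.ennreal_ofReal
  have hm' : AEMeasurable (fun t => ENNReal.ofReal (- g t)) σ := hg.neg.aemeasurable.ennreal_ofReal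
  have key : σ.withDensity (fun t => ENNReal.ofReal (g t)) =
      σ.withDensity (fun t => ENNReal.ofReal (- g t)) := by
    apply ext_of_forall_integral_eq_of_IsFiniteMeasure
    intro f
    rw [integral_withDensity_eq_integral_toReal_smul₀ hm (by simp),
      integral_withDensity_eq_integral_toReal_smul₀ hm' (by simp)]
    have hb : ∀ u : AddCircle T → ℝ, Integrable u σ → Integrable (fun t => u t • f t) σ := by
      intro u hu
      exact hu.mul_bdd (c := ‖f‖) f.continuous.aestronglyMeasurable
        (.of_forall fun t => f.norm_coe_le_norm t)
    simp only [ENNReal.toReal_ofReal']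
    rw [← sub_eq_zero, ← integral_sub (hb _ i1) (hb _ i2)]
    refine Eq.trans ?_ (h f.toContinuousMap)
    congr 1
    ext t
    simp only [smul_eq_mul]
    rcases le_total (g t) 0 with h0 | h0
    · rw [max_eq_right h0, max_eq_left (by linarith)]
      simp; ring
    · rw [max_eq_left h0, max_eq_right (by linarith)]
      simp; ring
  rw [withDensity_eq_iff hm hm' (by
    have := measure_lt_top (σ.withDensity (fun t => ENNReal.ofReal (g t))) Set.univ
    rw [withDensity_apply _ MeasurableSet.univ, Measure.restrict_univ] at this
    exact this.ne)] at key
  filter_upwards [key] with t ht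
  rcases le_total (g t) 0 with h0 | h0
  · rw [ENNReal.ofReal_of_nonpos h0, eq_comm, ENNReal.ofReal_eq_zero] at ht
    simp; linarith
  · rw [ENNReal.ofReal_of_nonpos (by linarith : - g t ≤ 0), ENNReal.ofReal_eq_zero] at ht
    simp; linarith

/-- An integrable function with vanishing Fourier coefficients vanishes. -/
theorem riesz_ae_zero (σ : Measure (AddCircle T)) [IsFiniteMeasure σ]
    (g : AddCircle T → ℂ) (hg : Integrable g σ)
    (h : ∀ n : ℤ, ∫ t, fourier n t * g t ∂σ = 0) : g =ᵐ[σ] 0 := by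
  have h1 : ∀ f : C(AddCircle T, ℝ), ∫ t, (f t : ℂ) * g t ∂σ = 0 := fun f =>
    riesz_functional_zero (rieszFun σ g hg) h ⟨fun t => (f t : ℂ), by fun_prop⟩
  have hi : ∀ f : C(AddCircle T, ℝ), Integrable (fun t => (f t : ℂ) * g t) σ := fun f =>
    riesz_int σ g hg ⟨fun t => (f t : ℂ), by fun_prop⟩
  have hre := riesz_real_zero σ (fun t => (g t).re) hg.re (fun f => by
    have := integral_re (𝕜 := ℂ) (hi f)
    rw [h1 f] at this
    simpa using this)
  have him := riesz_real_zero σ (fun t => (g t).im) hg.im (fun f => by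
    have := integral_im (𝕜 := ℂ) (hi f)
    rw [h1 f] at this
    simpa using this)
  filter_upwards [hre, him] with t h1 h2
  exact Complex.ext h1 h2
end circlePart

section corePart
open scoped ENNReal
variable {T : ℝ} [hT : Fact (0 < T)]

/-- multiplication by a bounded function on `L²` -/
noncomputable def rieszMul {α : Type*} [MeasurableSpace α] (σ : Measure α) (f : α → ℂ)
    (hf : MemLp f ∞ σ) : Lp ℂ 2 σ →L[ℂ] Lp ℂ 2 σ :=
  (ContinuousLinearMap.mul ℂ ℂ).holderL σ ∞ 2 2 (hf.toLp f)

theorem rieszMul_coe {α : Type*} [MeasurableSpace α] (σ : Measure α) (f : α → ℂ)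
    (hf : MemLp f ∞ σ) (u : Lp ℂ 2 σ) : rieszMul σ f hf u =ᵐ[σ] fun t => f t * u t := by
  have := (ContinuousLinearMap.mul ℂ ℂ).coeFn_holder (r := 2) (hf.toLp f) u
  filter_upwards [this, hf.coeFn_toLp] with t h1 h2
  have h3 : rieszMul σ f hf u t = (ContinuousLinearMap.mul ℂ ℂ).holder 2 (hf.toLp f) u t := rfl
  rw [h3, h1, h2]
  rfl

theorem riesz_memLp_fourier (σ : Measure (AddCircle T)) [IsFiniteMeasure σ] (n : ℤ) (p : ℝ≥0∞) :
    MemLp (fun t : AddCircle T => (fourier n t : ℂ)) p σ :=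
  MemLp.of_bound (fourier n).continuous.aestronglyMeasurable 1 (.of_forall fun t => by
    rw [fourier_apply, Circle.norm_coe])

theorem riesz_memLp_ind (σ : Measure (AddCircle T)) [IsFiniteMeasure σ]
    {S : Set (AddCircle T)} (hS : MeasurableSet S) :
    MemLp (S.indicator (fun _ => (1 : ℂ))) ∞ σ :=
  (memLp_const 1).indicator hS

theorem riesz_inner (σ : Measure (AddCircle T)) (u v : Lp ℂ 2 σ) :
    inner ℂ u v = ∫ t, v t * (starRingEnd ℂ) (u t) ∂σ := by
  rw [L2.inner_def]
  rfl

theorem riesz_inner_int (σ : Measure (AddCircle T)) (u v : Lp ℂ 2 σ) :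
    Integrable (fun t => v t * (starRingEnd ℂ) (u t)) σ :=
  L2.integrable_inner (𝕜 := ℂ) u v

theorem riesz_core (σ : Measure (AddCircle T)) [IsFiniteMeasure σ] (g : AddCircle T → ℂ)
    (hg : MemLp g 2 σ) (h : ∀ n : ℤ, 1 ≤ n → ∫ t, fourier n t * g t ∂σ = 0)
    (E : Set (AddCircle T)) (hE : MeasurableSet E)
    (hE0 : AddCircle.haarAddCircle E = 0) : ∀ᵐ t ∂σ, t ∈ E → g t = 0 := by
  let U : ℤ → Lp ℂ 2 σ →L[ℂ] Lp ℂ 2 σ := fun n => rieszMul σ _ (riesz_memLp_fourier σ n ∞)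
  have hUc : ∀ n u, U n u =ᵐ[σ] fun t => fourier n t * u t := fun n u => rieszMul_coe _ _ _ _
  let x : Lp ℂ 2 σ := (memLp_const (1 : ℂ)).toLp _
  have hx : x =ᵐ[σ] fun _ => 1 := MemLp.coeFn_toLp _
  obtain ⟨F, hF1, hF2⟩ := riesz_abstract U
    (by
      intro m n v
      apply Lp.ext
      filter_upwards [hUc m (U n v), hUc n v, hUc (m + n) v] with t h1 h2 h3
      rw [h1, h2, h3, fourier_add, mul_assoc])
    (by
      intro v
      apply Lp.ext
      filter_upwards [hUc 0 v] with t h1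
      rw [h1, fourier_zero, one_mul])
    (by
      intro n u v
      rw [riesz_inner, riesz_inner]
      apply integral_congr_ae
      filter_upwards [hUc n u, hUc (-n) v] with t h1 h2
      rw [h1, h2, map_mul, ← fourier_neg]
      ring) x
  -- the measure `|F|² σ` is a multiple of Lebesgue measure
  have hFE : ∀ᵐ t ∂σ, t ∈ E → F t = 0 := by
    have hi : Integrable (fun t => ‖F t‖ ^ 2) σ := (Lp.memLp F).integrable_norm_pow (by norm_num)
    have hm : AEMeasurable (fun t => ENNReal.ofReal (‖F t‖ ^ 2)) σ :=
      hi.aemeasurable.ennreal_ofReal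
    have := isFiniteMeasure_withDensity_ofReal (μ := σ) hi.2
    set c : ℝ≥0∞ := ENNReal.ofReal (∫ t, ‖F t‖ ^ 2 ∂σ) with hc
    have : IsFiniteMeasure (c • (AddCircle.haarAddCircle : Measure (AddCircle T))) :=
      Measure.smul_finite _ ENNReal.ofReal_ne_top
    have hd : ∀ n : ℤ, ∫ t, fourier n t ∂(σ.withDensity (fun t => ENNReal.ofReal (‖F t‖ ^ 2))) =
        ∫ t, fourier n t * ((‖F t‖ ^ 2 : ℝ) : ℂ) ∂σ := by
      intro n
      rw [integral_withDensity_eq_integral_toReal_smul₀ hm (by simp)]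
      congr 1
      ext t
      rw [ENNReal.toReal_ofReal (by positivity), Complex.real_smul, mul_comm]
    have key : σ.withDensity (fun t => ENNReal.ofReal (‖F t‖ ^ 2)) =
        c • AddCircle.haarAddCircle := by
      apply riesz_measure_ext
      intro n
      rw [hd, integral_smul_measure]
      by_cases hn : n = 0
      · subst hn
        simp only [fourier_zero, one_mul, integral_complex_ofReal, integral_const, hc]
        rw [ENNReal.toReal_ofReal (by positivity)]
        simp
      · have h0 : ∫ t : AddCircle T, fourier n t ∂AddCircle.haarAddCircle = 0 := 
          integral_eq_zero_of_add_right_eq_neg (μ := AddCircle.haarAddCircle)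
            (fourier_add_half_inv_index hn hT.out)
        rw [h0, smul_zero, ← hF1 n hn, riesz_inner]
        apply integral_congr_ae
        filter_upwards [hUc n F] with t h1
        rw [h1, mul_assoc, Complex.mul_conj, Complex.normSq_eq_norm_sq]
    have h0 : σ.withDensity (fun t => ENNReal.ofReal (‖F t‖ ^ 2)) E = 0 := by
      rw [key]; simp [hE0]
    rw [withDensity_apply _ hE, lintegral_eq_zero_iff' hm.restrict,
      Filter.EventuallyEq, ae_restrict_iff' hE] at h0
    filter_upwards [h0] with t ht hte
    have := ht hte
    simp only [Pi.zero_apply, ENNReal.ofReal_eq_zero] at this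
    have h2 : ‖F t‖ ^ 2 = 0 := le_antisymm this (by positivity)
    simpa using h2
  let S : Set (AddCircle T) := {t | F t = 0}
  have hS : MeasurableSet S :=
    (Lp.stronglyMeasurable F).measurable (measurableSet_singleton 0)
  let P := rieszMul σ _ (riesz_memLp_ind σ hS)
  have hPc : ∀ u, P u =ᵐ[σ] fun t => S.indicator (fun _ => (1 : ℂ)) t * u t :=
    fun u => rieszMul_coe _ _ _ _
  let y : Lp ℂ 2 σ := hg.star.toLp _
  have hy : y =ᵐ[σ] fun t => (starRingEnd ℂ) (g t) := MemLp.coeFn_toLp _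
  have hfin := hF2 P
    (by
      intro u v
      rw [riesz_inner, riesz_inner]
      apply integral_congr_ae
      filter_upwards [hPc u, hPc v] with t h1 h2
      rw [h1, h2]
      by_cases ht : t ∈ S <;> simp [ht])
    (by
      intro u
      apply Lp.ext
      filter_upwards [hPc u, hPc (P u)] with t h1 h2
      rw [h2, h1]
      by_cases ht : t ∈ S <;> simp [ht])
    (by
      intro n v
      apply Lp.ext
      filter_upwards [hPc v, hPc (U n v), hUc n v, hUc n (P v)] with t h1 h2 h3 h4
      rw [h2, h4, h1, h3]
      ring)
    (by
      apply Lp.ext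
      filter_upwards [hPc F, Lp.coeFn_zero ℂ 2 σ] with t h1 h2
      rw [h1, h2]
      by_cases ht : t ∈ S
      · have : F t = 0 := ht
        simp [this]
      · simp [ht])
    (by
      intro b hb
      have h1 := riesz_ae_zero σ _ (riesz_inner_int σ F b) (by
        intro n
        rw [← hb (-n), riesz_inner]
        apply integral_congr_ae
        filter_upwards [hUc (-n) F] with t h1
        rw [h1, map_mul, ← fourier_neg, neg_neg]
        ring)
      apply Lp.ext
      filter_upwards [hPc b, h1] with t h2 h3
      rw [h2]
      by_cases ht : t ∈ S
      · simp [ht]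
      · have hne : F t ≠ 0 := ht
        have : b t = 0 := by simpa [hne] using h3
        simp [this])
    y
    (by
      intro n hn
      rw [← h n hn, riesz_inner]
      apply integral_congr_ae
      filter_upwards [hUc n x, hx, hy] with t h1 h2 h3
      rw [h1, h2, h3]
      simp)
  have hz := riesz_ae_zero σ _ (riesz_inner_int σ (P y) x) (by
    intro n
    rw [← hfin n, riesz_inner]
    apply integral_congr_ae
    filter_upwards [hUc n x] with t h1
    rw [h1]
    ring)
  filter_upwards [hz, hx, hy, hPc y, hFE] with t h1 h2 h3 h4 h5 hte
  have hts : t ∈ S := h5 hte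
  rw [h2, h4, h3] at h1
  simpa [hts] using h1
end corePart

section finalPart

theorem riesz_density {α : Type*} [MeasurableSpace α] (p σ : Measure α) [IsFiniteMeasure p]
    [IsFiniteMeasure σ] (hp : p ≤ σ) : ∃ d : α → ℂ, MemLp d 2 σ ∧
      (∀ f : α → ℂ, Integrable f p → Integrable (fun t => f t * d t) σ) ∧
      (∀ f : α → ℂ, ∫ t, f t * d t ∂σ = ∫ t, f t ∂p) := by
  have hac : p ≪ σ := Measure.absolutelyContinuous_of_le hp
  refine ⟨fun t => ((p.rnDeriv σ t).toReal : ℂ), ?_, ?_, ?_⟩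
  · apply MemLp.of_bound (C := 1)
    · exact (Complex.measurable_ofReal.comp
        (Measure.measurable_rnDeriv p σ).ennreal_toReal).aestronglyMeasurable
    · filter_upwards [Measure.rnDeriv_le_one_of_le hp] with t ht
      rw [Complex.norm_real, Real.norm_of_nonneg ENNReal.toReal_nonneg]
      exact ENNReal.toReal_le_of_le_ofReal zero_le_one (by simpa using ht)
  · intro f hf
    have := (integrable_rnDeriv_smul_iff (f := f) hac).2 hf
    refine this.congr (.of_forall fun t => ?_)
    simp [mul_comm]
  · intro f
    rw [← integral_rnDeriv_smul (f := f) hac]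
    congr 1
    ext t
    simp [mul_comm]

theorem riesz_main (μ : ComplexMeasure (AddCircle (2 * Real.pi)))
    (h : ∀ n : ℤ, 1 ≤ n →
    ((∫ t, fourier n t ∂μ.re.toJordanDecomposition.posPart)
      - ∫ t, fourier n t ∂μ.re.toJordanDecomposition.negPart)
    + Complex.I * ((∫ t, fourier n t ∂μ.im.toJordanDecomposition.posPart)
      - ∫ t, fourier n t ∂μ.im.toJordanDecomposition.negPart) = 0) :
    μ ≪ᵥ (volume : Measure (AddCircle (2 * Real.pi))).toENNRealVectorMeasure := by
  set p₁ := μ.re.toJordanDecomposition.posPart with hp₁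
  set n₁ := μ.re.toJordanDecomposition.negPart with hn₁
  set p₂ := μ.im.toJordanDecomposition.posPart with hp₂
  set n₂ := μ.im.toJordanDecomposition.negPart with hn₂
  let σ := (p₁ + n₁) + (p₂ + n₂)
  have l1 : p₁ ≤ σ := (Measure.le_add_right le_rfl).trans (Measure.le_add_right le_rfl)
  have l2 : n₁ ≤ σ := (Measure.le_add_left le_rfl).trans (Measure.le_add_right le_rfl)
  have l3 : p₂ ≤ σ := (Measure.le_add_right le_rfl).trans (Measure.le_add_left le_rfl)
  have l4 : n₂ ≤ σ := (Measure.le_add_left le_rfl).trans (Measure.le_add_left le_rfl)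
  obtain ⟨d₁, a₁, b₁, c₁⟩ := riesz_density p₁ σ l1
  obtain ⟨d₂, a₂, b₂, c₂⟩ := riesz_density n₁ σ l2
  obtain ⟨d₃, a₃, b₃, c₃⟩ := riesz_density p₂ σ l3
  obtain ⟨d₄, a₄, b₄, c₄⟩ := riesz_density n₂ σ l4
  let g := fun t => (d₁ t - d₂ t) + Complex.I * (d₃ t - d₄ t)
  have hg : MemLp g 2 σ := (a₁.sub a₂).add ((a₃.sub a₄).const_mul _)
  have hint : ∀ f : AddCircle (2 * Real.pi) → ℂ, Integrable f σ → ∫ t, f t * g t ∂σ =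
      (∫ t, f t ∂p₁ - ∫ t, f t ∂n₁) + Complex.I * (∫ t, f t ∂p₂ - ∫ t, f t ∂n₂) := by
    intro f hf
    have e₁ := b₁ f (hf.mono_measure l1)
    have e₂ := b₂ f (hf.mono_measure l2)
    have e₃ := b₃ f (hf.mono_measure l3)
    have e₄ := b₄ f (hf.mono_measure l4)
    rw [← c₁, ← c₂, ← c₃, ← c₄, ← integral_sub e₁ e₂, ← integral_sub e₃ e₄,
      ← integral_const_mul]
    refine Eq.trans ?_ (integral_add (e₁.sub e₂) ((e₃.sub e₄).const_mul Complex.I))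
    congr 1
    ext t
    simp only [g, Pi.sub_apply]
    ring
  have hcore := riesz_core σ g hg (by
    intro n hn
    rw [hint _ (memLp_one_iff_integrable.1 (riesz_memLp_fourier σ n 1))]
    exact h n hn)
  apply VectorMeasure.AbsolutelyContinuous.mk
  intro E hE hE0
  rw [Measure.toENNRealVectorMeasure_apply_measurable hE] at hE0
  have hE1 : AddCircle.haarAddCircle E = 0 := by
    rw [AddCircle.volume_eq_smul_haarAddCircle] at hE0
    simpa [Real.pi_pos.not_ge] using hE0
  have hz := hcore E hE hE1
  have hI := hint (E.indicator fun _ => 1) ((integrable_const 1).indicator hE)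
  rw [integral_congr_ae (g := fun _ => 0) (by
    filter_upwards [hz] with t ht
    by_cases hte : t ∈ E
    · simp [ht hte]
    · simp [hte])] at hI
  simp only [integral_indicator hE, integral_const] at hI
  have hre : (μ E).re = p₁.real E - n₁.real E :=
    SignedMeasure.apply_eq_posPart_real_sub_negPart_real μ.re hE
  have him : (μ E).im = p₂.real E - n₂.real E :=
    SignedMeasure.apply_eq_posPart_real_sub_negPart_real μ.im hE
  have : μ E = (((μ E).re : ℝ) : ℂ) + Complex.I * (((μ E).im : ℝ) : ℂ) := by
    rw [mul_comm Complex.I, Complex.re_add_im]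
  rw [this, hre, him]
  simpa using hI.symm
end finalPart

/-- F. and M. Riesz theorem: a finite complex Borel measure on the circle whose Fourier
coefficients vanish for all negative integers is absolutely continuous with respect to
Lebesgue (Haar) measure. -/
theorem riesz_brothers (μ : ComplexMeasure (AddCircle (2 * Real.pi)))
    (h : ∀ n : ℤ, n < 0 → fourierCoeffCM μ n = 0) :
    μ ≪ᵥ (volume : Measure (AddCircle (2 * Real.pi))).toENNRealVectorMeasure := by
  apply riesz_main μ
  intro n hn
  have := h (-n) (by omega)
  simpa only [fourierCoeffCM, cmIntegral, neg_neg] using this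
end

section
/- For v ∈ C_c^∞(ℝ²), ‖∂_y^{1/2} v‖²_{L²} ≤ C(‖∂_x v‖²_{L²} + ‖x ∂_y v‖²_{L²} + ‖v‖²_{L²}) in the sense that ∫ |η| |v̂(ξ,η)|² dξ dη ≤ C ∫ (ξ² + |∂̂_x(xv)-type terms|) ...; concretely: ∫_{ℝ²} |η| |v̂(ξ,η)|² dξdη ≤ C (‖∂_x v‖²_{L²} + ‖x∂_y v‖²_{L²} + ‖v‖²_{L²}), which follows from the commutator identity ∂_y = [∂_x, x∂_y] via |⟨∂_y v, w⟩| = |⟨x∂_y v, ∂_x w⟩ + ⟨∂_x v, x∂_y w⟩|. -/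
open MeasureTheory FourierTransform

open SchwartzMap LineDeriv in
/-- Fourier-side form of the estimate. -/
theorem grushin_fourier_side (G A B M : SchwartzMap (EuclideanSpace ℝ (Fin 2)) ℂ)
    (D : SchwartzMap (EuclideanSpace ℝ (Fin 2)) ℂ)
    (hD : ∀ p, D p = fderiv ℝ G p (EuclideanSpace.single 0 1))
    (hA : ∀ p, A p = p 0 • G p) (hM : ∀ p, M p = p 1 • G p)
    (hB : ∀ p, ‖B p‖ = |p 1| * ‖D p‖) :
    ∫ p : EuclideanSpace ℝ (Fin 2), |p 1| * ‖G p‖ ^ 2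
      ≤ (∫ p : EuclideanSpace ℝ (Fin 2), ‖A p‖ ^ 2) + ∫ p : EuclideanSpace ℝ (Fin 2), ‖B p‖ ^ 2 := by
  have hint : ∀ S T : SchwartzMap (EuclideanSpace ℝ (Fin 2)) ℂ,
      Integrable (fun p => ‖S p‖ * ‖T p‖) := fun S T =>
    (S.memLp 2).norm.integrable_mul (T.memLp 2).norm
  have hcG : Continuous G := G.continuous
  have hcD : Continuous D := D.continuous
  have h1 : Integrable (fun p : EuclideanSpace ℝ (Fin 2) => |p 1| * ‖G p‖ ^ 2) := by
    refine (hint M G).congr (Filter.Eventually.of_forall fun p => ?_)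
    simp only [hM, norm_smul, Real.norm_eq_abs]
    ring
  have h2 : Integrable (fun p : EuclideanSpace ℝ (Fin 2) =>
      (|p 1| * p 0) * (2 * inner ℝ (G p) (D p))) := by
    refine ((hint A B).const_mul 2).mono' (by fun_prop) (Filter.Eventually.of_forall fun p => ?_)
    simp only [hA, hB, norm_smul, Real.norm_eq_abs, abs_mul, abs_abs, abs_two]
    have := abs_real_inner_le_norm (G p) (D p)
    calc _ ≤ |p 1| * |p 0| * (2 * (‖G p‖ * ‖D p‖)) := by gcongr
      _ = _ := by ring
  have h3 : Integrable (fun p : EuclideanSpace ℝ (Fin 2) => (|p 1| * p 0) * ‖G p‖ ^ 2) := by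
    refine (hint A M).mono' (by fun_prop) (Filter.Eventually.of_forall fun p => ?_)
    simp only [hA, hM, norm_smul, Real.norm_eq_abs, abs_mul, abs_abs, abs_pow, abs_norm]
    apply le_of_eq; ring
  have key := integral_bilinear_hasLineDerivAt_right_eq_neg_left_of_integrable
    (μ := (volume : Measure (EuclideanSpace ℝ (Fin 2))))
    (f := fun p : EuclideanSpace ℝ (Fin 2) => |p 1| * p 0)
    (f' := fun p : EuclideanSpace ℝ (Fin 2) => |p 1|)
    (g := fun p => ‖G p‖ ^ 2) (g' := fun p => 2 * inner ℝ (G p) (D p))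
    (v := EuclideanSpace.single 0 1) (B := ContinuousLinearMap.mul ℝ ℝ)
    (by simpa using h1) (by simpa using h2) (by simpa using h3)
    (by
      intro p _
      have : HasDerivAt (fun t : ℝ => |p 1| * (p 0 + t)) (|p 1| * 1) 0 :=
        ((hasDerivAt_id (0:ℝ)).const_add (p 0)).const_mul _
      simpa [HasLineDerivAt] using this)
    (by
      intro p _
      have hg := (G.differentiableAt (x := p)).hasFDerivAt.hasLineDerivAt (EuclideanSpace.single 0 1)
      rw [← hD] at hg
      have := HasDerivAt.norm_sq hg
      simpa [HasLineDerivAt] using this)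
  simp only [ContinuousLinearMap.mul_apply'] at key
  rw [← neg_eq_iff_eq_neg, ← integral_neg] at key
  rw [← key, ← integral_add (by simpa [sq] using hint A A) (by simpa [sq] using hint B B)]
  refine integral_mono h2.neg
    (by simp only [sq]; exact (hint A A).add (hint B B)) fun p => ?_
  have := abs_real_inner_le_norm (G p) (D p)
  simp only
  calc _ ≤ |(|p 1| * p 0) * (2 * inner ℝ (G p) (D p))| := neg_le_abs _
    _ = |p 1| * |p 0| * (2 * |inner ℝ (G p) (D p)|) := by simp [abs_mul]
    _ ≤ |p 1| * |p 0| * (2 * (‖G p‖ * ‖D p‖)) := by gcongr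
    _ = 2 * ‖A p‖ * ‖B p‖ := by rw [hA, hB, norm_smul, Real.norm_eq_abs]; ring
    _ ≤ _ := two_mul_le_add_sq _ _


open MeasureTheory FourierTransform

/-- Partial derivative in the `x` direction on `ℝ² = EuclideanSpace ℝ (Fin 2)`. -/
noncomputable def pdx2 (f : EuclideanSpace ℝ (Fin 2) → ℂ) (p : EuclideanSpace ℝ (Fin 2)) : ℂ :=
  fderiv ℝ f p (EuclideanSpace.single 0 1)

/-- Partial derivative in the `y` direction on `ℝ² = EuclideanSpace ℝ (Fin 2)`. -/
noncomputable def pdy2 (f : EuclideanSpace ℝ (Fin 2) → ℂ) (p : EuclideanSpace ℝ (Fin 2)) : ℂ :=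
  fderiv ℝ f p (EuclideanSpace.single 1 1)

/-- Subelliptic half-derivative gain in the `y` direction for the Grushin vector fields
`X₁ = ∂_x`, `X₂ = x∂_y`:
`∫ |η| |v̂(ξ,η)|² ≤ C (‖∂_x v‖² + ‖x∂_y v‖² + ‖v‖²)` for `v ∈ C_c^∞(ℝ²)`. -/
theorem subelliptic_half_derivative_gain :
    ∃ C > (0:ℝ), ∀ v : EuclideanSpace ℝ (Fin 2) → ℂ,
      ContDiff ℝ (⊤ : ℕ∞) v → HasCompactSupport v →
      ∫ p : EuclideanSpace ℝ (Fin 2), |p 1| * ‖𝓕 v p‖ ^ 2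
        ≤ C * ((∫ p : EuclideanSpace ℝ (Fin 2), ‖pdx2 v p‖ ^ 2)
            + (∫ p : EuclideanSpace ℝ (Fin 2), ‖p 0 • pdy2 v p‖ ^ 2)
            + ∫ p : EuclideanSpace ℝ (Fin 2), ‖v p‖ ^ 2) := by
  refine ⟨1, one_pos, fun v hv hc => ?_⟩
  let f : SchwartzMap (EuclideanSpace ℝ (Fin 2)) ℂ := hc.toSchwartzMap hv
  have hf : ∀ p, f p = v p := fun p => rfl
  have hfv : (f : EuclideanSpace ℝ (Fin 2) → ℂ) = v := rfl
  let e0 : EuclideanSpace ℝ (Fin 2) := EuclideanSpace.single 0 1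
  let e1 : EuclideanSpace ℝ (Fin 2) := EuclideanSpace.single 1 1
  have t0 : (fun x : EuclideanSpace ℝ (Fin 2) => inner ℝ x e0).HasTemperateGrowth := by fun_prop
  have t1 : (fun x : EuclideanSpace ℝ (Fin 2) => inner ℝ x e1).HasTemperateGrowth := by fun_prop
  have i0 : ∀ p : EuclideanSpace ℝ (Fin 2), inner ℝ p e0 = p 0 := fun p => by
    simp [e0, EuclideanSpace.inner_single_right]
  have i1 : ∀ p : EuclideanSpace ℝ (Fin 2), inner ℝ p e1 = p 1 := fun p => by
    simp [e1, EuclideanSpace.inner_single_right]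
  let G : SchwartzMap (EuclideanSpace ℝ (Fin 2)) ℂ := 𝓕 f
  let A := SchwartzMap.smulLeftCLM ℂ (fun x => inner ℝ x e0) G
  let M := SchwartzMap.smulLeftCLM ℂ (fun x => inner ℝ x e1) G
  let D : SchwartzMap (EuclideanSpace ℝ (Fin 2)) ℂ := LineDeriv.lineDerivOp e0 G
  let h : SchwartzMap (EuclideanSpace ℝ (Fin 2)) ℂ :=
    SchwartzMap.smulLeftCLM ℂ (fun x => inner ℝ x e0) (LineDeriv.lineDerivOp e1 f)
  let B : SchwartzMap (EuclideanSpace ℝ (Fin 2)) ℂ := 𝓕 h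
  have hD : ∀ p, D p = fderiv ℝ G p (EuclideanSpace.single 0 1) := fun p =>
    SchwartzMap.lineDerivOp_apply_eq_fderiv _ _ _
  have hA : ∀ p, A p = p 0 • G p := fun p => by
    simp only [A]; rw [SchwartzMap.smulLeftCLM_apply_apply t0, i0]
  have hM : ∀ p, M p = p 1 • G p := fun p => by
    simp only [M]; rw [SchwartzMap.smulLeftCLM_apply_apply t1, i1]
  have hB : ∀ p, ‖B p‖ = |p 1| * ‖D p‖ := by
    intro p
    have e := SchwartzMap.lineDerivOp_fourier_eq (LineDeriv.lineDerivOp e1 f) e0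
    rw [SchwartzMap.fourier_lineDerivOp_eq, FourierTransform.fourier_smul,
      LineDeriv.lineDerivOp_smul] at e
    have e' := congrArg (fun S : SchwartzMap (EuclideanSpace ℝ (Fin 2)) ℂ => ‖S p‖) e
    change ‖(2 * Real.pi * Complex.I) • (LineDeriv.lineDerivOp e0 M) p‖
      = ‖(-(2 * Real.pi * Complex.I)) • B p‖ at e'
    rw [norm_smul, norm_smul, norm_neg] at e'
    have hne : ‖(2 * Real.pi * Complex.I : ℂ)‖ ≠ 0 := by
      simp [Real.pi_ne_zero]
    rw [← mul_left_cancel₀ hne e', SchwartzMap.lineDerivOp_apply]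
    have hg := (G.differentiableAt (x := p)).hasFDerivAt.hasLineDerivAt e0
    have : HasLineDerivAt ℝ M (p 1 • D p) p e0 := by
      have h2 := HasDerivAt.const_smul (p 1) hg
      rw [hD]
      unfold HasLineDerivAt
      convert h2 using 2 with t
      simp [hM, e0]
    rw [this.lineDeriv, norm_smul, Real.norm_eq_abs]
  have main := grushin_fourier_side G A B M D hD hA hM hB
  have hBh : ∫ p, ‖B p‖ ^ 2 = ∫ p : EuclideanSpace ℝ (Fin 2), ‖p 0 • pdy2 v p‖ ^ 2 := by
    rw [SchwartzMap.integral_norm_sq_fourier h]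
    congr 1; ext p
    simp only [h]
    rw [SchwartzMap.smulLeftCLM_apply_apply t0, i0, SchwartzMap.lineDerivOp_apply_eq_fderiv]
    rfl
  have hAx : (2 * Real.pi) ^ 2 * ∫ p, ‖A p‖ ^ 2 = ∫ p : EuclideanSpace ℝ (Fin 2), ‖pdx2 v p‖ ^ 2 := by
    have e := SchwartzMap.integral_norm_sq_fourier (LineDeriv.lineDerivOp e0 f)
    rw [SchwartzMap.fourier_lineDerivOp_eq] at e
    rw [← integral_const_mul]
    refine Eq.trans ?_ (e.trans ?_)
    · congr 1; ext p
      change _ = ‖(2 * Real.pi * Complex.I) • A p‖ ^ 2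
      rw [norm_smul, mul_pow]
      simp [mul_pow]
    · congr 1
  have hApos : 0 ≤ ∫ p, ‖A p‖ ^ 2 := integral_nonneg fun p => by positivity
  have hvpos : 0 ≤ ∫ p, ‖v p‖ ^ 2 := integral_nonneg fun p => by positivity
  have hpi : 1 ≤ (2 * Real.pi) ^ 2 := by nlinarith [Real.pi_gt_three]
  change ∫ p : EuclideanSpace ℝ (Fin 2), |p 1| * ‖G p‖ ^ 2 ≤ _
  rw [← hAx, ← hBh]
  nlinarith
end
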